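/- Let F be a Ferrers diagram of semiperimeter n+1. For any two minimal recurrent configurations c, c' ∈ Rec_min(G(F)), we have CanonTop(c) = CanonTop(c') if and only if c = c'. -/

import Mathlib

open Classical

/-- A Ferrers diagram of semiperimeter `n + 1`, encoded by the set of its row labels
(labels `0, …, n` run along the south-east border; `0` labels the top row and the
last label `n` is a column label). -/
structure Ferrers (n : ℕ) where
  rows : Finset (Fin (n + 1))
  zero_mem : 0 ∈ rows
  last_not_mem : Fin.last n ∉ rows

namespace Ferrers

/-- `(i, j)` is a cell of the diagram: `i` is a row label, `j` a column label, `i < j`. -/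
def Cell {n : ℕ} (F : Ferrers n) (i j : Fin (n + 1)) : Prop :=
  i ∈ F.rows ∧ j ∉ F.rows ∧ i < j

/-- Adjacency in the Ferrers graph `G(F)`. -/
def Adj {n : ℕ} (F : Ferrers n) (u v : Fin (n + 1)) : Prop :=
  F.Cell u v ∨ F.Cell v u

/-- Degree of a vertex in `G(F)`. -/
noncomputable def deg {n : ℕ} (F : Ferrers n) (v : Fin (n + 1)) : ℕ :=
  {u | F.Adj v u}.ncard

/-- Toppling a single vertex.  The height at the sink `0` is kept equal to `c 0`
(grains sent to the sink vanish); toppling the sink sends one grain to each of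
its neighbours. -/
noncomputable def topple {n : ℕ} (F : Ferrers n) (c : Fin (n + 1) → ℕ)
    (v : Fin (n + 1)) : Fin (n + 1) → ℕ :=
  fun u =>
    if u = 0 then c 0
    else if u = v then c v - F.deg v
    else if F.Adj v u then c u + 1
    else c u

/-- Toppling the vertices of a list in order. -/
noncomputable def toppleList {n : ℕ} (F : Ferrers n) (c : Fin (n + 1) → ℕ)
    (l : List (Fin (n + 1))) : Fin (n + 1) → ℕ :=
  l.foldl F.topple c

/-- Simultaneous toppling of a set of vertices. -/
noncomputable def toppleSet {n : ℕ} (F : Ferrers n) (c : Fin (n + 1) → ℕ)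
    (S : Set (Fin (n + 1))) : Fin (n + 1) → ℕ :=
  fun u =>
    if u = 0 then c 0
    else c u + {w ∈ S | F.Adj w u}.ncard - if u ∈ S then F.deg u else 0

/-- A configuration is stable if every non-sink vertex has fewer grains than its degree. -/
def Stable {n : ℕ} (F : Ferrers n) (c : Fin (n + 1) → ℕ) : Prop :=
  ∀ v, v ≠ 0 → c v < F.deg v

/-- A Dhar (burning) ordering for `c`: an ordering `v₀ = 0, v₁, …, vₙ` of all the
vertices such that each `vᵢ` (`i ≥ 1`) is unstable after toppling `v₀, …, v_{i-1}`. -/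
def DharSeq {n : ℕ} (F : Ferrers n) (c : Fin (n + 1) → ℕ) (l : List (Fin (n + 1))) : Prop :=
  l.length = n + 1 ∧ l.Nodup ∧ l.head? = some 0 ∧
    ∀ i, ∀ h : i < l.length, 1 ≤ i →
      F.deg (l.get ⟨i, h⟩) ≤ F.toppleList c (l.take i) (l.get ⟨i, h⟩)

/-- Recurrent configurations (via Dhar's criterion).  The height at the sink is
normalised to `0`. -/
def Recurrent {n : ℕ} (F : Ferrers n) (c : Fin (n + 1) → ℕ) : Prop :=
  c 0 = 0 ∧ F.Stable c ∧ ∃ l, F.DharSeq c l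

/-- Minimal recurrent configurations: recurrent with minimal total number of grains. -/
def RecMin {n : ℕ} (F : Ferrers n) (c : Fin (n + 1) → ℕ) : Prop :=
  F.Recurrent c ∧ ∀ c', F.Recurrent c' → (∑ v, c v) ≤ ∑ v, c' v

/-- Canonical toppling: block `0` is `{0}` (the sink); from then on, blocks with odd
index are the sets of currently unstable column vertices and blocks with even index
the sets of currently unstable row vertices.  The first component is the configuration
just before toppling the block recorded in the second component. -/
noncomputable def canonAux {n : ℕ} (F : Ferrers n) (c : Fin (n + 1) → ℕ) :
    ℕ → ((Fin (n + 1) → ℕ) × Set (Fin (n + 1)))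
  | 0 => (c, {0})
  | k + 1 =>
    let c' := F.toppleSet (canonAux F c k).1 (canonAux F c k).2
    (c', {v | v ≠ 0 ∧ (if k % 2 = 0 then v ∉ F.rows else v ∈ F.rows) ∧ F.deg v ≤ c' v})

/-- The `k`-th block of the canonical toppling of `c`:
`canonTop F c 0 = U⁰ = {0}`, `canonTop F c (2i-1) = Vⁱ`, `canonTop F c (2i) = Uⁱ`. -/
noncomputable def canonTop {n : ℕ} (F : Ferrers n) (c : Fin (n + 1) → ℕ) (k : ℕ) :
    Set (Fin (n + 1)) :=
  (F.canonAux c k).2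

/-- The configuration just before toppling the `k`-th block of the canonical toppling. -/
noncomputable def canonConfig {n : ℕ} (F : Ferrers n) (c : Fin (n + 1) → ℕ) (k : ℕ) :
    Fin (n + 1) → ℕ :=
  (F.canonAux c k).1

/-- The index of the block of the canonical toppling of `c` containing `v`. -/
noncomputable def bIdx {n : ℕ} (F : Ferrers n) (c : Fin (n + 1) → ℕ) (v : Fin (n + 1)) : ℕ :=
  sInf {k | v ∈ F.canonTop c k}

/-- `T` is a EW-tableau on `F` (entries of non-cells are normalised to `false`):
the top row contains only `1`s, every other row contains a `0`, and there is no
rectangle with two diagonally opposite `0`s and two `1`s in the other corners. -/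
def IsEW {n : ℕ} (F : Ferrers n) (T : Fin (n + 1) → Fin (n + 1) → Bool) : Prop :=
  (∀ i j, ¬F.Cell i j → T i j = false) ∧
  (∀ j, F.Cell 0 j → T 0 j = true) ∧
  (∀ i, i ∈ F.rows → i ≠ 0 → ∃ j, F.Cell i j ∧ T i j = false) ∧
  (∀ i i' j j', F.Cell i j → F.Cell i j' → F.Cell i' j → F.Cell i' j' →
    T i j = T i' j' → T i j' = T i' j → T i j = T i j')

/-- The configuration associated to a tableau: row vertices count the `1`s in their
row, column vertices count the `0`s in their column (the sink is normalised to `0`). -/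
noncomputable def phiTC {n : ℕ} (F : Ferrers n) (T : Fin (n + 1) → Fin (n + 1) → Bool) :
    Fin (n + 1) → ℕ :=
  fun v =>
    if v = 0 then 0
    else if v ∈ F.rows then {j | F.Cell v j ∧ T v j = true}.ncard
    else {i | F.Cell i v ∧ T i v = false}.ncard

/-- The tableau associated to a (minimal recurrent) configuration: a cell `(i, j)`
gets a `1` exactly when `i` lies in an earlier block than `j` in the canonical
toppling of `c`. -/
noncomputable def phiCT {n : ℕ} (F : Ferrers n) (c : Fin (n + 1) → ℕ) :
    Fin (n + 1) → Fin (n + 1) → Bool :=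
  fun i j => if F.Cell i j ∧ F.bIdx c i < F.bIdx c j then true else false

/-- The supplementary tableau of `T`: `S i j = 1` exactly when the row vertex `i`
lies in an earlier block than the column vertex `j` in `CanonTop (φ_TC T)`. -/
noncomputable def suppS {n : ℕ} (F : Ferrers n) (T : Fin (n + 1) → Fin (n + 1) → Bool)
    (i j : Fin (n + 1)) : Bool :=
  if F.bIdx (F.phiTC T) i < F.bIdx (F.phiTC T) j then true else false

/-- The entry of `T` in cell `(j, k)` is a cornersupport entry. -/
def Cornersupport {n : ℕ} (F : Ferrers n) (T : Fin (n + 1) → Fin (n + 1) → Bool)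
    (j k : Fin (n + 1)) : Prop :=
  ∃ j' k', j' ∈ F.rows ∧ k' ∉ F.rows ∧ j' ≠ j ∧ k' ≠ k ∧
    F.suppS T j' k' = !(T j k) ∧ F.suppS T j' k = T j k ∧ F.suppS T j k' = T j k

/-- `ν_v(T)`: the number of non-cornersupport `0`s in row `v` (if `v` is a row label),
resp. non-cornersupport `1`s in column `v` (if `v` is a column label). -/
noncomputable def nu {n : ℕ} (F : Ferrers n) (T : Fin (n + 1) → Fin (n + 1) → Bool)
    (v : Fin (n + 1)) : ℕ :=
  if v ∈ F.rows then {k | F.Cell v k ∧ T v k = false ∧ ¬F.Cornersupport T v k}.ncard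
  else {i | F.Cell i v ∧ T i v = true ∧ ¬F.Cornersupport T i v}.ncard

/-- `μ_v(c)`: if `v ∈ Uⁱ`, the number of `k ∈ Vⁱ` with `k > v`; if `v ∈ Vⁱ`,
the number of `k ∈ U^{i-1}` with `k < v`.  In both cases the relevant block is the
one immediately preceding the block of `v`. -/
noncomputable def mu {n : ℕ} (F : Ferrers n) (c : Fin (n + 1) → ℕ) (v : Fin (n + 1)) : ℕ :=
  if v ∈ F.rows then {k | v < k ∧ k ∈ F.canonTop c (F.bIdx c v - 1)}.ncard
  else {k | k < v ∧ k ∈ F.canonTop c (F.bIdx c v - 1)}.ncard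

/-- The minimal recurrent configuration with the same canonical toppling as `c`:
if `j ∈ Uⁱ` then `minrec c j = |{ℓ ∈ Vᵏ : j < ℓ, k > i}|`, and if `j ∈ Vⁱ` then
`minrec c j = |{ℓ ∈ Uᵏ : ℓ < j, k ≥ i}|` (blocks `Vᵏ` sit at odd index `2k - 1`,
blocks `Uᵏ` at even index `2k`). -/
noncomputable def minrecFun {n : ℕ} (F : Ferrers n) (c : Fin (n + 1) → ℕ) :
    Fin (n + 1) → ℕ :=
  fun j =>
    if j = 0 then 0
    else if j ∈ F.rows then
      {l | j < l ∧ ∃ k, F.bIdx c j < 2 * k + 1 ∧ l ∈ F.canonTop c (2 * k + 1)}.ncard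
    else
      {l | l < j ∧ ∃ k, F.bIdx c j < 2 * k ∧ l ∈ F.canonTop c (2 * k)}.ncard

/-- The number of edges of `G(F)` (equivalently, the number of cells of `F`). -/
noncomputable def edgeCount {n : ℕ} (F : Ferrers n) : ℕ :=
  {p : Fin (n + 1) × Fin (n + 1) | F.Cell p.1 p.2}.ncard

theorem adj_symm {n : ℕ} {F : Ferrers n} {u v : Fin (n + 1)} (h : F.Adj u v) : F.Adj v u :=
  Or.symm h

theorem adj_comm {n : ℕ} {F : Ferrers n} {u v : Fin (n + 1)} : F.Adj u v ↔ F.Adj v u :=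
  ⟨adj_symm, adj_symm⟩

theorem ncard_adj_le_deg {n : ℕ} (F : Ferrers n) (S : Set (Fin (n + 1))) (u : Fin (n + 1)) :
    {w ∈ S | F.Adj w u}.ncard ≤ F.deg u :=
  Set.ncard_le_ncard (fun _ hw => adj_symm hw.2) (Set.toFinite _)

/-- `b` ranks the vertices so that the sink comes first and every other vertex is unstable
once all vertices of smaller rank have toppled. -/
def IsBurningRank {n : ℕ} (F : Ferrers n) (c : Fin (n + 1) → ℕ) (b : Fin (n + 1) → ℕ) : Prop :=
  ∀ v, v ≠ 0 → b 0 < b v ∧ F.deg v ≤ c v + {u | b u < b v ∧ F.Adj u v}.ncard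

/-- The configuration counting, at each non-sink vertex, the neighbours of no smaller rank. -/
noncomputable def laterNeighbors {n : ℕ} (F : Ferrers n) (b : Fin (n + 1) → ℕ) :
    Fin (n + 1) → ℕ :=
  fun v => if v = 0 then 0 else {u | ¬ b u < b v ∧ F.Adj u v}.ncard

theorem laterNeighbors_add_ncard {n : ℕ} (F : Ferrers n) (b : Fin (n + 1) → ℕ)
    {v : Fin (n + 1)} (hv : v ≠ 0) :
    F.laterNeighbors b v + {u | b u < b v ∧ F.Adj u v}.ncard = F.deg v := by
  rw [laterNeighbors, if_neg hv, deg, ← Set.ncard_union_eq]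
  · congr 1
    ext u
    simp only [Set.mem_union, Set.mem_ofPred_eq, adj_comm (u := v)]
    rw [← or_and_right]
    exact and_iff_right (Classical.em _).symm
  · rw [Set.disjoint_left]
    exact fun u hu hu' => hu.1 hu'.1

/-- Toppling a list of distinct vertices adds to any other non-sink vertex one grain per
neighbour in the list. -/
theorem toppleList_apply_of_notMem {n : ℕ} (F : Ferrers n) {u : Fin (n + 1)} (hu : u ≠ 0)
    (l : List (Fin (n + 1))) (hl : l.Nodup) (hul : u ∉ l) (c : Fin (n + 1) → ℕ) :
    F.toppleList c l u = c u + {w | w ∈ l ∧ F.Adj w u}.ncard := by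
  induction l generalizing c with
  | nil => simp [toppleList]
  | cons a l ih =>
    rw [List.nodup_cons] at hl
    rw [List.mem_cons, not_or] at hul
    have hstep : F.toppleList c (a :: l) u = F.toppleList (F.topple c a) l u := rfl
    rw [hstep, ih hl.2 hul.2]
    by_cases ha : F.Adj a u
    · have hset : {w | w ∈ a :: l ∧ F.Adj w u} = insert a {w | w ∈ l ∧ F.Adj w u} := by
        ext w
        simp only [List.mem_cons, Set.mem_ofPred_eq, Set.mem_insert_iff]
        constructor
        · tauto
        · rintro (rfl | h) <;> tauto
      rw [hset, Set.ncard_insert_of_notMem (fun h => hl.1 h.1) (Set.toFinite _)]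
      simp only [topple, hu, hul.1, ha, if_true, if_false]
      omega
    · have hset : {w | w ∈ a :: l ∧ F.Adj w u} = {w | w ∈ l ∧ F.Adj w u} := by
        ext w
        simp only [List.mem_cons, Set.mem_ofPred_eq]
        constructor
        · rintro ⟨rfl | h, h'⟩ <;> tauto
        · tauto
      rw [hset]
      simp only [topple, hu, hul.1, ha, if_false]

theorem getElem_notMem_take {α : Type*} {l : List α} (hl : l.Nodup) {i : ℕ}
    (hi : i < l.length) : l[i] ∉ l.take i := by
  intro h
  obtain ⟨j, hj, hji⟩ := List.mem_take_iff_getElem.1 h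
  have := (hl.getElem_inj_iff).1 hji
  omega

theorem getElem_ne_zero_of_head {n : ℕ} {l : List (Fin (n + 1))} (hl : l.Nodup)
    (h0 : l.head? = some 0) {i : ℕ} (hi : i < l.length) (hi1 : 1 ≤ i) : l[i] ≠ 0 := by
  intro h
  rw [List.head?_eq_getElem?, List.getElem?_eq_some_iff] at h0
  obtain ⟨h0', h0⟩ := h0
  have := (hl.getElem_inj_iff).1 (h.trans h0.symm)
  omega

theorem IsBurningRank.exists_dharSeq {n : ℕ} {F : Ferrers n} {c : Fin (n + 1) → ℕ}
    {b : Fin (n + 1) → ℕ} (h : F.IsBurningRank c b) : ∃ l, F.DharSeq c l := by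
  let l := (List.finRange (n + 1)).insertionSort (fun u v => b u ≤ b v)
  have hperm : l.Perm (List.finRange (n + 1)) := List.perm_insertionSort _ _
  have hnodup : l.Nodup := hperm.nodup_iff.2 (List.nodup_finRange _)
  have hmem : ∀ v, v ∈ l := fun v => hperm.mem_iff.2 (List.mem_finRange v)
  have : Std.Total (fun u v => b u ≤ b v) := ⟨fun u v => le_total _ _⟩
  have : IsTrans (Fin (n + 1)) (fun u v => b u ≤ b v) := ⟨fun u v w => le_trans⟩
  have hsorted : l.Pairwise (fun u v => b u ≤ b v) := List.pairwise_insertionSort _ _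
  have hlen : l.length = n + 1 := by rw [hperm.length_eq, List.length_finRange]
  have hle : ∀ i j (hi : i < l.length) (hj : j < l.length), i ≤ j → b l[i] ≤ b l[j] := by
    intro i j hi hj hij
    rcases hij.eq_or_lt with rfl | hij
    · exact le_rfl
    · exact List.pairwise_iff_getElem.1 hsorted i j hi hj hij
  have hhead : l.head? = some 0 := by
    obtain ⟨j, hj, hj0⟩ := List.mem_iff_getElem.1 (hmem 0)
    rw [List.head?_eq_getElem?, List.getElem?_eq_some_iff]
    refine ⟨by omega, ?_⟩
    by_contra hne
    have h1 := (h _ hne).1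
    have h2 := hle 0 j (by omega) hj (Nat.zero_le j)
    rw [hj0] at h2
    omega
  refine ⟨l, hlen, hnodup, hhead, fun i hi hi1 => ?_⟩
  have hne := getElem_ne_zero_of_head hnodup hhead hi hi1
  rw [List.get_eq_getElem, F.toppleList_apply_of_notMem hne _
    (hnodup.sublist (List.take_sublist i l)) (getElem_notMem_take hnodup hi)]
  refine (h _ hne).2.trans (Nat.add_le_add_left (Set.ncard_le_ncard ?_ (Set.toFinite _)) _)
  rintro u ⟨hu, hadj⟩
  refine ⟨?_, hadj⟩
  obtain ⟨j, hj, rfl⟩ := List.mem_iff_getElem.1 (hmem u)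
  refine List.mem_take_iff_getElem.2 ⟨j, ?_, rfl⟩
  by_contra hji
  have := hle i j hi hj (by omega)
  omega

theorem Recurrent.laterNeighbors {n : ℕ} {F : Ferrers n} {c : Fin (n + 1) → ℕ}
    {b : Fin (n + 1) → ℕ} (hc : F.Recurrent c) (h : F.IsBurningRank c b) :
    F.Recurrent (F.laterNeighbors b) := by
  refine ⟨if_pos rfl, fun v hv => ?_, IsBurningRank.exists_dharSeq (b := b) fun v hv =>
    ⟨(h v hv).1, (F.laterNeighbors_add_ncard b hv).ge⟩⟩
  have h1 := F.laterNeighbors_add_ncard b hv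
  have h2 := (h v hv).2
  have h3 := hc.2.1 v hv
  omega

/-- A minimal recurrent configuration is determined by any of its burning ranks. -/
theorem RecMin.eq_laterNeighbors {n : ℕ} {F : Ferrers n} {c : Fin (n + 1) → ℕ}
    {b : Fin (n + 1) → ℕ} (hc : F.RecMin c) (h : F.IsBurningRank c b) :
    c = F.laterNeighbors b := by
  have hle : ∀ v, F.laterNeighbors b v ≤ c v := by
    intro v
    by_cases hv : v = 0
    · simp [Ferrers.laterNeighbors, hv]
    · have h1 := F.laterNeighbors_add_ncard b hv
      have h2 := (h v hv).2
      omega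
  have hsum := hc.2 _ (hc.1.laterNeighbors h)
  have heq := (Finset.sum_eq_sum_iff_of_le fun v _ => hle v).1
    (le_antisymm (Finset.sum_le_sum fun v _ => hle v) hsum)
  exact funext fun v => (heq v (Finset.mem_univ v)).symm

/-- The vertices toppled before the `k`-th block of the canonical toppling. -/
def toppledBefore {n : ℕ} (F : Ferrers n) (c : Fin (n + 1) → ℕ) (k : ℕ) :
    Set (Fin (n + 1)) :=
  {w | ∃ j < k, w ∈ F.canonTop c j}

theorem toppledBefore_succ {n : ℕ} (F : Ferrers n) (c : Fin (n + 1) → ℕ) (k : ℕ) :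
    F.toppledBefore c (k + 1) = F.toppledBefore c k ∪ F.canonTop c k := by
  ext w
  simp only [toppledBefore, Set.mem_ofPred_eq, Set.mem_union, Nat.lt_succ_iff_lt_or_eq]
  constructor
  · rintro ⟨j, hj | rfl, hw⟩
    · exact Or.inl ⟨j, hj, hw⟩
    · exact Or.inr hw
  · rintro (⟨j, hj, hw⟩ | hw)
    · exact ⟨j, Or.inl hj, hw⟩
    · exact ⟨k, Or.inr rfl, hw⟩

theorem toppledBefore_mono {n : ℕ} (F : Ferrers n) (c : Fin (n + 1) → ℕ) :
    Monotone (F.toppledBefore c) :=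
  fun _ _ hkl _ ⟨j, hj, hw⟩ => ⟨j, hj.trans_le hkl, hw⟩

theorem mem_canonTop_zero {n : ℕ} {F : Ferrers n} {c : Fin (n + 1) → ℕ} {v : Fin (n + 1)} :
    v ∈ F.canonTop c 0 ↔ v = 0 :=
  Iff.rfl

theorem mem_canonTop_succ {n : ℕ} {F : Ferrers n} {c : Fin (n + 1) → ℕ} {k : ℕ}
    {v : Fin (n + 1)} :
    v ∈ F.canonTop c (k + 1) ↔ v ≠ 0 ∧ (if k % 2 = 0 then v ∉ F.rows else v ∈ F.rows) ∧
      F.deg v ≤ F.canonConfig c (k + 1) v :=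
  Iff.rfl

theorem deg_le_canonConfig {n : ℕ} {F : Ferrers n} {c : Fin (n + 1) → ℕ} {k : ℕ}
    {v : Fin (n + 1)} (hv : v ≠ 0) (h : v ∈ F.canonTop c k) :
    F.deg v ≤ F.canonConfig c k v := by
  cases k with
  | zero => exact absurd (mem_canonTop_zero.1 h) hv
  | succ k => exact (mem_canonTop_succ.1 h).2.2

/-- Grain balance along the canonical toppling of a stable configuration; the blocks are
pairwise disjoint. -/
theorem Stable.canonConfig_add {n : ℕ} {F : Ferrers n} {c : Fin (n + 1) → ℕ}
    (hc : F.Stable c) (k : ℕ) :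
    Disjoint (F.toppledBefore c k) (F.canonTop c k) ∧
    ∀ u, u ≠ 0 → F.canonConfig c k u + (if u ∈ F.toppledBefore c k then F.deg u else 0) =
      c u + {w ∈ F.toppledBefore c k | F.Adj w u}.ncard := by
  induction k with
  | zero =>
    have hempty : F.toppledBefore c 0 = ∅ := by
      simp [toppledBefore]
    simp [hempty, canonConfig, canonAux]
  | succ k ih =>
    obtain ⟨hdisj, hbal⟩ := ih
    have key : ∀ u, u ≠ 0 → F.canonConfig c (k + 1) u +
        (if u ∈ F.toppledBefore c (k + 1) then F.deg u else 0) =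
        c u + {w ∈ F.toppledBefore c (k + 1) | F.Adj w u}.ncard := by
      intro u hu
      have hcfg : F.canonConfig c (k + 1) u = F.canonConfig c k u +
          {w ∈ F.canonTop c k | F.Adj w u}.ncard - if u ∈ F.canonTop c k then F.deg u else 0 :=
        if_neg hu
      have hset : {w ∈ F.toppledBefore c (k + 1) | F.Adj w u} =
          {w ∈ F.toppledBefore c k | F.Adj w u} ∪ {w ∈ F.canonTop c k | F.Adj w u} := by
        rw [toppledBefore_succ]
        ext w
        simp only [Set.mem_union, Set.mem_ofPred_eq]
        tauto
      rw [hset, Set.ncard_union_eq (hdisj.mono (fun _ h => h.1) (fun _ h => h.1)),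
        toppledBefore_succ, hcfg]
      have hb := hbal u hu
      by_cases h1 : u ∈ F.canonTop c k
      · have h2 : u ∉ F.toppledBefore c k := fun h2 => Set.disjoint_left.1 hdisj h2 h1
        have h3 := deg_le_canonConfig hu h1
        simp only [Set.mem_union, h1, h2, or_true, if_true, if_false] at hb ⊢
        omega
      · simp only [Set.mem_union, h1, or_false, if_false] at hb ⊢
        omega
    refine ⟨Set.disjoint_left.2 fun u hu hu' => ?_, key⟩
    have hu0 := (mem_canonTop_succ.1 hu').1
    have h1 := deg_le_canonConfig hu0 hu'
    have h2 := key u hu0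
    rw [if_pos hu] at h2
    have h3 := F.ncard_adj_le_deg (F.toppledBefore c (k + 1)) u
    have h4 := hc u hu0
    omega

theorem Stable.canonConfig_eq {n : ℕ} {F : Ferrers n} {c : Fin (n + 1) → ℕ}
    (hc : F.Stable c) {k : ℕ} {u : Fin (n + 1)} (hu : u ≠ 0) (huk : u ∉ F.toppledBefore c k) :
    F.canonConfig c k u = c u + {w ∈ F.toppledBefore c k | F.Adj w u}.ncard := by
  have h := (hc.canonConfig_add k).2 u hu
  rwa [if_neg huk] at h

/-- A vertex that becomes unstable through earlier blocks is toppled at most two blocks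
later. -/
theorem Stable.mem_toppledBefore {n : ℕ} {F : Ferrers n} {c : Fin (n + 1) → ℕ}
    (hc : F.Stable c) {k : ℕ} {v : Fin (n + 1)} (hv : v ≠ 0)
    (h : F.deg v ≤ c v + {w ∈ F.toppledBefore c k | F.Adj w v}.ncard) :
    v ∈ F.toppledBefore c (k + 3) := by
  by_contra hnot
  have aux : ∀ j, k ≤ j + 1 → j + 1 < k + 3 →
      ¬ (if j % 2 = 0 then v ∉ F.rows else v ∈ F.rows) := by
    intro j hkj hj hpar
    have hnotj : v ∉ F.toppledBefore c (j + 1) :=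
      fun hj' => hnot (F.toppledBefore_mono c hj.le hj')
    have hle : {w ∈ F.toppledBefore c k | F.Adj w v}.ncard ≤
        {w ∈ F.toppledBefore c (j + 1) | F.Adj w v}.ncard :=
      Set.ncard_le_ncard (fun w hw => ⟨F.toppledBefore_mono c hkj hw.1, hw.2⟩) (Set.toFinite _)
    refine hnot ⟨j + 1, hj, mem_canonTop_succ.2 ⟨hv, hpar, ?_⟩⟩
    rw [hc.canonConfig_eq hv hnotj]
    omega
  have h1 := aux k (by omega) (by omega)
  have h2 := aux (k + 1) (by omega) (by omega)
  rcases Nat.mod_two_eq_zero_or_one k with hk | hk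
  · rw [if_pos hk, not_not] at h1
    rw [if_neg (by omega)] at h2
    exact h2 h1
  · have hk' : (k + 1) % 2 = 0 := by omega
    rw [if_neg (by omega)] at h1
    rw [if_pos hk', not_not] at h2
    exact h1 h2

theorem exists_toppledBefore_superset {n : ℕ} {F : Ferrers n} {c : Fin (n + 1) → ℕ}
    (l : List (Fin (n + 1))) (h : ∀ w ∈ l, ∃ k, w ∈ F.canonTop c k) :
    ∃ K, ∀ w ∈ l, w ∈ F.toppledBefore c K := by
  induction l with
  | nil => exact ⟨0, by simp⟩
  | cons a l ih =>
    obtain ⟨K, hK⟩ := ih fun w hw => h w (List.mem_cons_of_mem a hw)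
    obtain ⟨k, hk⟩ := h a List.mem_cons_self
    refine ⟨max K (k + 1), fun w hw => ?_⟩
    rcases List.mem_cons.1 hw with rfl | hw
    · exact ⟨k, by omega, hk⟩
    · exact F.toppledBefore_mono c (le_max_left _ _) (hK w hw)

theorem Recurrent.exists_mem_canonTop {n : ℕ} {F : Ferrers n} {c : Fin (n + 1) → ℕ}
    (hc : F.Recurrent c) (v : Fin (n + 1)) : ∃ k, v ∈ F.canonTop c k := by
  obtain ⟨-, hst, l, hlen, hnodup, hhead, hdhar⟩ := hc
  have hall : ∀ i, ∀ hi : i < l.length, ∃ k, l[i] ∈ F.canonTop c k := by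
    intro i
    induction i using Nat.strong_induction_on with
    | _ i ih =>
      intro hi
      rcases Nat.eq_zero_or_pos i with rfl | hpos
      · rw [List.head?_eq_getElem?, List.getElem?_eq_some_iff] at hhead
        exact ⟨0, mem_canonTop_zero.2 hhead.2⟩
      · have hne := getElem_ne_zero_of_head hnodup hhead hi hpos
        obtain ⟨K, hK⟩ := exists_toppledBefore_superset (F := F) (c := c) (l.take i) (by
          intro w hw
          obtain ⟨j, hj, rfl⟩ := List.mem_take_iff_getElem.1 hw
          exact ih j (by omega) (by omega))
        have hd := hdhar i hi hpos
        rw [List.get_eq_getElem, F.toppleList_apply_of_notMem hne _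
          (hnodup.sublist (List.take_sublist i l)) (getElem_notMem_take hnodup hi)] at hd
        have hle : {w | w ∈ l.take i ∧ F.Adj w l[i]}.ncard ≤
            {w ∈ F.toppledBefore c K | F.Adj w l[i]}.ncard :=
          Set.ncard_le_ncard (fun w hw => ⟨hK w hw.1, hw.2⟩) (Set.toFinite _)
        obtain ⟨k, -, hk⟩ := hst.mem_toppledBefore (k := K) hne
          (hd.trans (Nat.add_le_add_left hle _))
        exact ⟨k, hk⟩
  have huniv : l.toFinset = Finset.univ := by
    rw [← Finset.card_eq_iff_eq_univ, List.toFinset_card_of_nodup hnodup, hlen, Fintype.card_fin]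
  have hv : v ∈ l := List.mem_toFinset.1 (huniv ▸ Finset.mem_univ v)
  obtain ⟨i, hi, rfl⟩ := List.mem_iff_getElem.1 hv
  exact hall i hi

theorem Recurrent.isBurningRank_bIdx {n : ℕ} {F : Ferrers n} {c : Fin (n + 1) → ℕ}
    (hc : F.Recurrent c) : F.IsBurningRank c (F.bIdx c) := by
  intro v hv
  have hmem : v ∈ F.canonTop c (F.bIdx c v) := Nat.sInf_mem (hc.exists_mem_canonTop v)
  constructor
  · have h0 : F.bIdx c 0 = 0 :=
      Nat.sInf_eq_zero.2 (Or.inl (mem_canonTop_zero (F := F) (c := c).2 rfl))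
    rw [h0, Nat.pos_iff_ne_zero]
    intro h
    rw [h] at hmem
    exact hv (mem_canonTop_zero.1 hmem)
  · have hnot : v ∉ F.toppledBefore c (F.bIdx c v) :=
      fun h => Set.disjoint_left.1 (hc.2.1.canonConfig_add _).1 h hmem
    have h := deg_le_canonConfig hv hmem
    rw [hc.2.1.canonConfig_eq hv hnot] at h
    refine h.trans (Nat.add_le_add_left (Set.ncard_le_ncard ?_ (Set.toFinite _)) _)
    rintro w ⟨⟨j, hj, hw⟩, hadj⟩
    exact ⟨(Nat.sInf_le hw).trans_lt hj, hadj⟩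

end Ferrers

/-- Two minimal recurrent configurations on `G(F)` have the same
canonical toppling if and only if they are equal. -/
theorem canonTop_eq_iff_eq {n : ℕ} (F : Ferrers n) (c c' : Fin (n + 1) → ℕ)
    (hc : F.RecMin c) (hc' : F.RecMin c') :
    (∀ k, F.canonTop c k = F.canonTop c' k) ↔ c = c' := by
  constructor
  · intro h
    have hb : F.bIdx c = F.bIdx c' := by
      funext v
      simp only [Ferrers.bIdx, h]
    have hcb := hc.1.isBurningRank_bIdx
    have hcb' := hc'.1.isBurningRank_bIdx
    rw [← hb] at hcb'
    rw [hc.eq_laterNeighbors hcb, hc'.eq_laterNeighbors hcb']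
  · rintro rfl k
    rfl
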